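/- Let L and K be two Hopf subalgebras of H. For any finite-dimensional left K-module M there is a canonical epimorphism of L-modules π_M : ⊕_{C ∈ L\H/K} (L ⊗_{L ∩ {}^C K} {}^C M) → H ⊗_K M, given on the component indexed by C by l ⊗_{L ∩ {}^C K} v ↦ lv for l ∈ L and v ∈ {}^C M, where the target H ⊗_K M is the induced module M↑_K^H restricted to L. -/

import Mathlib

open TensorProduct

namespace MackeyPaper

noncomputable section

universe v

variable (k : Type) [Field k] [CharZero k] [IsAlgClosed k]
variable (H : Type) [Ring H] [HopfAlgebra k H]

/-- A subcoalgebra of `H`: a `k`-subspace `C` with `Δ(C) ⊆ C ⊗ C`. -/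
def IsSubcoalgebra (C : Submodule k H) : Prop :=
  ∀ c ∈ C, Coalgebra.comul (R := k) c ∈
    LinearMap.range (TensorProduct.map C.subtype C.subtype)

/-- A simple (nonzero, minimal) subcoalgebra of `H`. -/
def IsSimpleSubcoalgebra (C : Submodule k H) : Prop :=
  IsSubcoalgebra k H C ∧ C ≠ ⊥ ∧
    ∀ D : Submodule k H, D ≤ C → IsSubcoalgebra k H D → D ≠ ⊥ → D = C

/-- A Hopf subalgebra of `H`: a subalgebra which is a subcoalgebra and is
stable under the antipode. -/
def IsHopfSubalgebra (K : Subalgebra k H) : Prop :=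
  IsSubcoalgebra k H K.toSubmodule ∧ ∀ x ∈ K, HopfAlgebra.antipode (R := k) x ∈ K

/-- `Λ` is the (two-sided) idempotent integral of the Hopf subalgebra `K`,
i.e. the integral normalized by `ε(Λ) = 1`. -/
def IsIdempotentIntegral (K : Subalgebra k H) (Λ : H) : Prop :=
  Λ ∈ K ∧ Coalgebra.counit (R := k) Λ = 1 ∧
    ∀ x ∈ K, x * Λ = Coalgebra.counit (R := k) x • Λ ∧
      Λ * x = Coalgebra.counit (R := k) x • Λ

/-- A cocommutative element of `H`; the cocommutative elements of `H` form
the character ring `C(H^*)`. -/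
def IsCocomm (x : H) : Prop :=
  (TensorProduct.comm k H H) (Coalgebra.comul (R := k) x) = Coalgebra.comul (R := k) x

/-- The character ring `C(H^*)`, i.e. the space of cocommutative elements of `H`,
as a `k`-subspace of `H`. -/
def charRing : Submodule k H :=
  LinearMap.ker ((TensorProduct.comm k H H).toLinearMap ∘ₗ Coalgebra.comul (R := k)
      - Coalgebra.comul (R := k))

/-- `d` is the irreducible character (of `H^*`) associated to the simple
subcoalgebra `C`: the unique cocommutative element of `C` whose counit is the
positive square root of `dim_k C`. -/
def IsCharacterOf (d : H) (C : Submodule k H) : Prop :=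
  d ∈ C ∧ IsCocomm k H d ∧
    Coalgebra.counit (R := k) d = ((Nat.sqrt (Module.finrank k ↥C) : ℕ) : k)

/-- The right coset `CK` of a subcoalgebra `C`, i.e. the subspace `C·K`. -/
def CKsub (K : Subalgebra k H) (C : Submodule k H) : Submodule k H :=
  C * K.toSubmodule

/-- The conjugate Hopf subalgebra `ᶜK` of `K` by a simple subcoalgebra `C`
(with associated irreducible character `c`): the span of all simple
subcoalgebras of `H` whose irreducible character `d` satisfies
`d·c·Λ_K = ε(d)·c·Λ_K`.  (The condition is stated for all cocommutative
elements of `C` resp. `D`; this is equivalent, since the cocommutative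
elements of a simple subcoalgebra are exactly the scalar multiples of its
irreducible character.) -/
def conjK (K : Subalgebra k H) (Λ : H) (C : Submodule k H) : Submodule k H :=
  sSup {D : Submodule k H | IsSimpleSubcoalgebra k H D ∧
    ∀ d ∈ D, IsCocomm k H d → ∀ c ∈ C, IsCocomm k H c →
      d * (c * Λ) = Coalgebra.counit (R := k) d • (c * Λ)}

/-- A complete irredundant system of representatives (by simple subcoalgebras)
of the double cosets `L\H/K`.  (Taking `L = ⊥` gives a system of
representatives of the right cosets `H/K`.) -/
def IsDoubleCosetReps (L K : Subalgebra k H) {ι : Type} (rep : ι → Submodule k H) : Prop :=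
  (∀ i, IsSimpleSubcoalgebra k H (rep i)) ∧
  (∀ i j, L.toSubmodule * rep i * K.toSubmodule = L.toSubmodule * rep j * K.toSubmodule
      → i = j) ∧
  (∀ C : Submodule k H, IsSimpleSubcoalgebra k H C →
      ∃ i, C ≤ L.toSubmodule * rep i * K.toSubmodule)

section Ind

variable (K : Subalgebra k H) (M : Type v) [AddCommGroup M] [Module k M]
  [Module ↥K M] [IsScalarTower k ↥K M]

/-- The relations defining the induced module `H ⊗_K M` as a quotient of
`H ⊗_k M`: the `H`-submodule generated by the elements `a ⊗ m - 1 ⊗ a·m`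
for `a ∈ K` (equivalently, spanned by all `h·a ⊗ m - h ⊗ a·m`). -/
def indRel : Submodule H (H ⊗[k] M) :=
  Submodule.span H {z | ∃ (a : ↥K) (m : M),
    z = (a : H) ⊗ₜ[k] m - (1 : H) ⊗ₜ[k] (a • m)}

/-- The induced module `M↑_K^H = H ⊗_K M`, a left `H`-module. -/
abbrev Ind := (H ⊗[k] M) ⧸ indRel k H K M

variable (C : Submodule k H)

/-- The underlying space `CK ⊗_k M` of which the conjugate module `ᶜM` is a
quotient. -/
def CKM : Type _ := ↥(CKsub k H K C) ⊗[k] M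

instance : AddCommGroup (CKM k H K M C) :=
  inferInstanceAs (AddCommGroup (↥(CKsub k H K C) ⊗[k] M))

instance : Module k (CKM k H K M C) :=
  inferInstanceAs (Module k (↥(CKsub k H K C) ⊗[k] M))

/-- The pure tensor `x ⊗ m` as an element of `CK ⊗_k M`. -/
def ckmk (x : ↥(CKsub k H K C)) (m : M) : CKM k H K M C := x ⊗ₜ[k] m

/-- The relations defining the conjugate module `ᶜM = CK ⊗_K M` as a quotient
of `CK ⊗_k M`: `x·a ⊗ m - x ⊗ a·m` for `a ∈ K`. -/
def conjRel : Submodule k (CKM k H K M C) :=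
  Submodule.span k {z | ∃ (x : ↥(CKsub k H K C)) (a : ↥K) (m : M)
    (hxa : (x : H) * (a : H) ∈ CKsub k H K C),
    z = ckmk k H K M C ⟨(x : H) * (a : H), hxa⟩ m - ckmk k H K M C x (a • m)}

/-- The conjugate module `ᶜM := CK ⊗_K M`. -/
abbrev ConjM := CKM k H K M C ⧸ conjRel k H K M C

/-- The canonical copy of the conjugate module `ᶜM = CK ⊗_K M` inside
`H ⊗_K M` (the image of `CK ⊗_K M` under multiplication; this is indeed a
copy of `ᶜM` since `H` is a free right `K`-module and `CK` is one of the
coset summands). -/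
def conjMsub : Submodule k (Ind k H K M) :=
  Submodule.span k {z | ∃ (x : H) (_ : x ∈ CKsub k H K C) (m : M),
    z = Submodule.Quotient.mk (x ⊗ₜ[k] m)}

end Ind

section Comp

variable (L K : Subalgebra k H) (Λ : H) (C : Submodule k H)
variable (M : Type v) [AddCommGroup M] [Module k M] [Module ↥K M] [IsScalarTower k ↥K M]

/-- The underlying space `L ⊗_k (CK ⊗_k M)`. -/
def LCM : Type _ := ↥L ⊗[k] CKM k H K M C

instance : AddCommGroup (LCM k H L K C M) :=
  inferInstanceAs (AddCommGroup (↥L ⊗[k] CKM k H K M C))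

instance : Module k (LCM k H L K C M) :=
  inferInstanceAs (Module k (↥L ⊗[k] CKM k H K M C))

/-- The pure tensor `l ⊗ w` as an element of `L ⊗_k (CK ⊗_k M)`. -/
def lcmk (l : ↥L) (w : CKM k H K M C) : LCM k H L K C M := l ⊗ₜ[k] w

/-- The relations defining `L ⊗_{L ∩ ᶜK} ᶜM` as a quotient of
`L ⊗_k (CK ⊗_k M)`: the balancedness relations over `L ∩ ᶜK` (first set),
together with (the image of) the relations defining `ᶜM = CK ⊗_K M`
(second set). -/
def compRel : Submodule k (LCM k H L K C M) :=
  Submodule.span k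
    ({z | ∃ (l : ↥L) (a : H) (haL : a ∈ L) (_ : a ∈ conjK k H K Λ C)
        (x : ↥(CKsub k H K C)) (m : M) (hax : a * (x : H) ∈ CKsub k H K C),
        z = lcmk k H L K C M ⟨(l : H) * a, mul_mem l.2 haL⟩ (ckmk k H K M C x m)
          - lcmk k H L K C M l (ckmk k H K M C ⟨a * (x : H), hax⟩ m)} ∪
     {z | ∃ (l : ↥L) (x : ↥(CKsub k H K C)) (a : ↥K) (m : M)
        (hxa : (x : H) * (a : H) ∈ CKsub k H K C),
        z = lcmk k H L K C M l (ckmk k H K M C ⟨(x : H) * (a : H), hxa⟩ m)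
          - lcmk k H L K C M l (ckmk k H K M C x (a • m))})

/-- The module `L ⊗_{L ∩ ᶜK} ᶜM` (a left `L`-module via multiplication on the
first tensor factor). -/
abbrev Comp := LCM k H L K C M ⧸ compRel k H L K Λ C M

end Comp

open DirectSum

section Mackey

variable (L K : Subalgebra k H) (Λ : H)

/-- The Mackey isomorphism property for the pair `(L, K)` at the `K`-module
`M`: for any system of double coset representatives, the left-multiplication
map `⊕_C L ⊗_{L ∩ ᶜK} ᶜM → M↑_K^H↓_L^H`, `l ⊗ v ↦ l·v`, is an isomorphism of
`L`-modules.  (A `k`-linear map satisfying the displayed formula on the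
spanning elements is automatically `L`-equivariant for the evident
`L`-actions, so this property is stated for `k`-linear maps.) -/
def MackeyAt (M : Type v) [AddCommGroup M] [Module k M] [Module ↥K M]
    [IsScalarTower k ↥K M] [Module.Finite k M] : Prop :=
  ∀ (ι : Type) [DecidableEq ι] (rep : ι → Submodule k H),
    IsDoubleCosetReps k H L K rep →
    ∃ π : (⨁ i : ι, Comp k H L K Λ (rep i) M) →ₗ[k] Ind k H K M,
      Function.Bijective π ∧
      ∀ (i : ι) (l : ↥L) (x : ↥(CKsub k H K (rep i))) (m : M),
        π (DirectSum.of (fun i => Comp k H L K Λ (rep i) M) i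
            (Submodule.Quotient.mk (lcmk k H L K (rep i) M l (ckmk k H K M (rep i) x m)))) =
          Submodule.Quotient.mk (((l : H) * (x : H)) ⊗ₜ[k] m)

/-- `(L, K)` is a Mackey pair of Hopf subalgebras of `H` (here `Λ` is the
idempotent integral of `K`): for every finite-dimensional `K`-module `M` the
left-multiplication homomorphism `π_M` is an isomorphism. -/
def IsMackeyPair : Prop :=
  ∀ (M : Type v) [AddCommGroup M] [Module k M] [Module ↥K M]
    [IsScalarTower k ↥K M] [Module.Finite k M], MackeyAt k H L K Λ M

end Mackey


section Statements

variable [FiniteDimensional k H] [IsSemisimpleRing H]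

/-!
The Mackey map hits every class `l x ⊗ m` with `l ∈ L` and `x ∈ CK`, so it is onto as soon as the
double cosets `LCK` span `H`. As each simple subcoalgebra lies in one of them, this reduces to `H`
being the sum of its simple subcoalgebras, and by duality to the semisimplicity of `H*`: a simple
subcoalgebra is the space on which a maximal two-sided ideal of `H*` vanishes, and in a semisimple
ring these ideals intersect in zero.

That `H*` is semisimple is the theorem of Larson and Radford. The functional
`lam h = Tr(x ↦ h S²(x))` is a left integral in `H*` whose Nakayama automorphism is `S²`. As `H` is
a symmetric algebra, `S²` is conjugation by a unit, and Radford's argument shows that it has finite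
order. Hence `lam 1 = Tr(S²)` is a sum of squared norms of traces of this unit on the simple
`H`-modules, and its vanishing would force `lam` to vanish at an integral of `H`. So `lam 1 ≠ 0`,
and `x ⊗ y ↦ lam(x S(y)) / lam 1` is a separability idempotent for `H*`.
-/

section Antipode

open Coalgebra HopfAlgebra WithConv
open Algebra.TensorProduct (includeLeft includeRight)

variable {R A B : Type*} [CommSemiring R] [Semiring A] [HopfAlgebra R A] [Semiring B]
  [Algebra R B]

lemma algHom_convMul_algHom_comp_antipode (φ : A →ₐ[R] B) :
    toConv φ.toLinearMap * toConv (φ.toLinearMap ∘ₗ antipode R) = 1 := by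
  have h := LinearMap.algHom_comp_convMul_distrib φ (toConv (LinearMap.id : A →ₗ[R] A))
    (toConv (antipode R))
  rw [LinearMap.id_mul_antipode] at h
  apply ofConv_injective
  rw [← ofConv_toConv φ.toLinearMap, ← ofConv_toConv (φ.toLinearMap ∘ₗ antipode R)]
  refine h.symm.trans ?_
  ext x
  simp

lemma algHom_comp_antipode_convMul_algHom (φ : A →ₐ[R] B) :
    toConv (φ.toLinearMap ∘ₗ antipode R) * toConv φ.toLinearMap = 1 := by
  have h := LinearMap.algHom_comp_convMul_distrib φ (toConv (antipode R))
    (toConv (LinearMap.id : A →ₗ[R] A))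
  rw [LinearMap.antipode_mul_id] at h
  apply ofConv_injective
  refine h.symm.trans ?_
  ext x
  simp

variable (R A) in
lemma toConv_includeLeft_mul_toConv_includeRight :
    toConv (includeLeft : A →ₐ[R] A ⊗[R] A).toLinearMap *
      toConv (includeRight : A →ₐ[R] A ⊗[R] A).toLinearMap = toConv comul := by
  ext x
  rw [(ℛ R x).convMul_apply]
  simp [(ℛ R x).eq]

lemma comul_antipode (x : A) :
    comul (R := R) (antipode R x) =
      TensorProduct.comm R A A (TensorProduct.map (antipode R) (antipode R) (comul x)) := by
  let ιlS : WithConv (A →ₗ[R] A ⊗[R] A) :=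
    toConv ((includeLeft : A →ₐ[R] A ⊗[R] A).toLinearMap ∘ₗ antipode R)
  let ιrS : WithConv (A →ₗ[R] A ⊗[R] A) :=
    toConv ((includeRight : A →ₐ[R] A ⊗[R] A).toLinearMap ∘ₗ antipode R)
  -- Both sides are inverse to the comultiplication in the convolution algebra of maps `A → A ⊗ A`.
  have left_inv : ιrS * ιlS * toConv comul = 1 := by
    rw [← toConv_includeLeft_mul_toConv_includeRight, mul_assoc, ← mul_assoc ιlS,
      algHom_comp_antipode_convMul_algHom, one_mul, algHom_comp_antipode_convMul_algHom]
  have h := DFunLike.congr_fun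
    (congrArg ofConv (left_inv_eq_right_inv left_inv LinearMap.comul_right_inv)) x
  rw [← (ℛ R x).eq]
  refine h.symm.trans ?_
  change (ιrS * ιlS) x = _
  rw [(ℛ R x).convMul_apply]
  simp [ιlS, ιrS]

lemma comul_antipode_antipode (x : A) :
    comul (R := R) (antipode R (antipode R x)) =
      TensorProduct.map (antipode R ∘ₗ antipode R) (antipode R ∘ₗ antipode R) (comul x) := by
  rw [comul_antipode, comul_antipode, ← (ℛ R x).eq]
  simp

lemma sum_tmul_one_mul_map_antipode {ι : Type*} {x : A} (r : Coalgebra.Repr R x ι) :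
    ∑ i ∈ r.index, (r.left i ⊗ₜ[R] 1) *
      TensorProduct.map (antipode R) (antipode R) (comul (R := R) (r.right i)) =
        1 ⊗ₜ[R] antipode R x := by
  have key : toConv (includeLeft : A →ₐ[R] A ⊗[R] A).toLinearMap *
      toConv (TensorProduct.map (antipode R) (antipode R) ∘ₗ comul) =
        toConv ((includeRight : A →ₐ[R] A ⊗[R] A).toLinearMap ∘ₗ antipode R) := by
    have : toConv (TensorProduct.map (antipode R) (antipode R) ∘ₗ comul) =
        toConv ((includeLeft : A →ₐ[R] A ⊗[R] A).toLinearMap ∘ₗ antipode R) *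
          toConv ((includeRight : A →ₐ[R] A ⊗[R] A).toLinearMap ∘ₗ antipode R) := by
      ext x
      rw [(ℛ R x).convMul_apply]
      simp [← (ℛ R x).eq]
    rw [this, ← mul_assoc, algHom_convMul_algHom_comp_antipode, one_mul]
  exact (r.convMul_apply _ _).symm.trans (DFunLike.congr_fun (congrArg ofConv key) x)

lemma sum_comul_antipode_antipode_mul {ι : Type*} {x : A} (r : Coalgebra.Repr R x ι) :
    ∑ i ∈ r.index, comul (R := R) (antipode R (antipode R (r.right i))) *
        (antipode R (r.left i) ⊗ₜ[R] 1) = 1 ⊗ₜ[R] antipode R (antipode R x) := by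
  have h := congrArg (antipode R (A := A ⊗[R] A)) (sum_tmul_one_mul_map_antipode r)
  simp only [map_sum, antipode_mul_antidistrib] at h
  have anti : ∀ y : A, comul (R := R) (antipode R (antipode R y)) =
      antipode R (A := A ⊗[R] A) (TensorProduct.map (antipode R) (antipode R) (comul y)) := by
    intro y
    rw [comul_antipode_antipode, TensorProduct.map_comp]
    rfl
  simpa [anti] using h

end Antipode

section Hit

open Coalgebra WithConv

variable {R C : Type*} [CommSemiring R] [AddCommMonoid C] [Module R C] [Coalgebra R C]

/-- The left action `f ⇀ x = f(x₂) x₁` of the dual algebra on a coalgebra. -/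
def leftHit : Module.Dual R C →ₗ[R] C →ₗ[R] C where
  toFun f := (TensorProduct.rid R C).toLinearMap ∘ₗ f.lTensor C ∘ₗ comul
  map_add' f g := by simp only [LinearMap.lTensor_add, LinearMap.add_comp, LinearMap.comp_add]
  map_smul' c f := by
    simp only [LinearMap.lTensor_smul, LinearMap.smul_comp, LinearMap.comp_smul, RingHom.id_apply]

/-- The right action `x ↼ f = f(x₁) x₂` of the dual algebra on a coalgebra. -/
def rightHit : Module.Dual R C →ₗ[R] C →ₗ[R] C where
  toFun f := (TensorProduct.lid R C).toLinearMap ∘ₗ f.rTensor C ∘ₗ comul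
  map_add' f g := by simp only [LinearMap.rTensor_add, LinearMap.add_comp, LinearMap.comp_add]
  map_smul' c f := by
    simp only [LinearMap.rTensor_smul, LinearMap.smul_comp, LinearMap.comp_smul, RingHom.id_apply]

lemma leftHit_apply {ι : Type*} {x : C} (r : Coalgebra.Repr R x ι) (f : Module.Dual R C) :
    leftHit f x = ∑ i ∈ r.index, f (r.right i) • r.left i := by
  simp [leftHit, ← r.eq]

lemma rightHit_apply {ι : Type*} {x : C} (r : Coalgebra.Repr R x ι) (f : Module.Dual R C) :
    rightHit f x = ∑ i ∈ r.index, f (r.left i) • r.right i := by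
  simp [rightHit, ← r.eq]

lemma apply_leftHit (f φ : Module.Dual R C) (x : C) :
    φ (leftHit f x) = (toConv φ * toConv f) x := by
  rw [leftHit_apply (ℛ R x), (ℛ R x).convMul_apply]
  simp [mul_comm]

lemma apply_rightHit (f φ : Module.Dual R C) (x : C) :
    φ (rightHit f x) = (toConv f * toConv φ) x := by
  rw [rightHit_apply (ℛ R x), (ℛ R x).convMul_apply]
  simp

lemma leftHit_counit (x : C) : leftHit (counit (R := R)) x = x := by
  rw [leftHit_apply (ℛ R x)]
  simpa only [map_sum, TensorProduct.rid_tmul, one_smul] using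
    congrArg (TensorProduct.rid R C) (sum_tmul_counit_eq (ℛ R x))

lemma rightHit_counit (x : C) : rightHit (counit (R := R)) x = x := by
  rw [rightHit_apply (ℛ R x), sum_counit_smul]

lemma rightHit_rightHit (f g : Module.Dual R C) (x : C) :
    rightHit g (rightHit f x) = rightHit (toConv f * toConv g).ofConv x := by
  have coassoc := congrArg
    ((TensorProduct.lid R C).toLinearMap ∘ₗ
      TensorProduct.map f ((TensorProduct.lid R C).toLinearMap ∘ₗ g.rTensor C))
    (sum_tmul_tmul_eq (ℛ R x) (fun i => ℛ R ((ℛ R x).left i)) fun i => ℛ R ((ℛ R x).right i))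
  rw [rightHit_apply (ℛ R x), rightHit_apply (ℛ R x)]
  simp only [map_sum, map_smul]
  simpa [rightHit_apply (ℛ R _), (ℛ R _).convMul_apply, Finset.smul_sum, Finset.sum_smul,
    smul_smul, mul_comm] using coassoc.symm

lemma comul_eq_sum_basis_tmul_rightHit {ι : Type*} [Fintype ι] (b : Module.Basis ι R C) (x : C) :
    comul x = ∑ j, b j ⊗ₜ[R] rightHit (b.coord j) x :=
  calc
    comul x = ∑ i ∈ (ℛ R x).index, (∑ j, b.coord j ((ℛ R x).left i) • b j) ⊗ₜ (ℛ R x).right i := by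
      simp only [Module.Basis.coord_apply, b.sum_repr, (ℛ R x).eq]
    _ = ∑ j, b j ⊗ₜ[R] rightHit (b.coord j) x := by
      simp only [rightHit_apply (ℛ R x), TensorProduct.sum_tmul, TensorProduct.tmul_sum,
        TensorProduct.tmul_smul, TensorProduct.smul_tmul']
      exact Finset.sum_comm

lemma comul_eq_sum_leftHit_tmul_basis {ι : Type*} [Fintype ι] (b : Module.Basis ι R C) (x : C) :
    comul x = ∑ j, leftHit (b.coord j) x ⊗ₜ[R] b j :=
  calc
    comul x = ∑ i ∈ (ℛ R x).index, (ℛ R x).left i ⊗ₜ ∑ j, b.coord j ((ℛ R x).right i) • b j := by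
      simp only [Module.Basis.coord_apply, b.sum_repr, (ℛ R x).eq]
    _ = ∑ j, leftHit (b.coord j) x ⊗ₜ[R] b j := by
      simp only [leftHit_apply (ℛ R x), TensorProduct.sum_tmul, TensorProduct.tmul_sum,
        TensorProduct.tmul_smul, TensorProduct.smul_tmul']
      exact Finset.sum_comm

end Hit

section MulForm

variable {R A : Type*} [CommSemiring R] [Semiring A] [Algebra R A]

/-- The bilinear form `(x, y) ↦ lam (x * y)` of a functional `lam` on an algebra. -/
def mulForm (lam : Module.Dual R A) : LinearMap.BilinForm R A :=
  (LinearMap.mul R A).compr₂ lam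

lemma mulForm_apply (lam : Module.Dual R A) (x y : A) : mulForm lam x y = lam (x * y) := rfl

end MulForm

section Integrals

open Coalgebra HopfAlgebra WithConv

variable {F A : Type*} [Field F] [Ring A] [HopfAlgebra F A]

/-- A left integral in the dual of a Hopf algebra, written as `x₁ lam(x₂) = lam(x) 1`, which
amounts to `φ * lam = φ(1) lam` for all functionals `φ`. -/
def IsLeftIntegral (lam : Module.Dual F A) : Prop :=
  ∀ x, leftHit lam x = lam x • 1

lemma isLeftIntegral_iff {lam : Module.Dual F A} :
    IsLeftIntegral lam ↔
      ∀ φ : Module.Dual F A, toConv φ * toConv lam = φ 1 • toConv lam := by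
  refine ⟨fun h φ => ?_, fun h x => Module.eval_apply_injective F (LinearMap.ext fun φ => ?_)⟩
  · ext x
    rw [← apply_leftHit, h, map_smul]
    simp [mul_comm]
  · simp [apply_leftHit, h, mul_comm]

/-- `S(x₁) lam(x₂ y) = y₁ lam(x y₂)`. -/
lemma IsLeftIntegral.antipode_leftHit {lam : Module.Dual F A} (hlam : IsLeftIntegral lam)
    (x y : A) :
    antipode F (leftHit ((mulForm lam).flip y) x) = leftHit (mulForm lam x) y := by
  let P : A →ₗ[F] A := leftHit.flip y ∘ₗ mulForm lam
  let Q : A →ₗ[F] A := Algebra.linearMap F A ∘ₗ (mulForm lam).flip y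
  have id_mul_P : toConv LinearMap.id * toConv P = toConv Q := by
    ext z
    have h := hlam (z * y)
    rw [leftHit_apply ((ℛ F z).mul (ℛ F y))] at h
    rw [(ℛ F z).convMul_apply]
    simpa [P, Q, leftHit_apply (ℛ F y), mulForm_apply, Finset.sum_product, Finset.mul_sum,
      Algebra.algebraMap_eq_smul_one] using h
  have P_eq : toConv (antipode F) * toConv Q = toConv P := by
    rw [← id_mul_P, ← mul_assoc, LinearMap.antipode_mul_id, one_mul]
  have h := DFunLike.congr_fun (congrArg ofConv P_eq) x
  rw [(ℛ F x).convMul_apply] at h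
  simpa [P, Q, leftHit_apply (ℛ F x), Algebra.algebraMap_eq_smul_one] using h

/-- A left integral `lam` in the dual of a Hopf algebra together with a right integral `Λ` in the
Hopf algebra, normalized by `lam Λ = 1`. -/
structure IsIntegralPair (lam : Module.Dual F A) (Λ : A) : Prop where
  isLeftIntegral : IsLeftIntegral lam
  mul_eq (x : A) : Λ * x = counit (R := F) x • Λ
  apply_eq_one : lam Λ = 1

namespace IsIntegralPair

variable {lam : Module.Dual F A} {Λ : A}

lemma antipode_leftHit (h : IsIntegralPair lam Λ) (y : A) :
    antipode F (leftHit ((mulForm lam).flip y) Λ) = y := by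
  have mulForm_Λ : mulForm lam Λ = counit := by
    ext x
    rw [mulForm_apply, h.mul_eq, map_smul, h.apply_eq_one, smul_eq_mul, mul_one]
  rw [h.isLeftIntegral.antipode_leftHit, mulForm_Λ, leftHit_counit]

lemma separatingRight (h : IsIntegralPair lam Λ) : (mulForm lam).SeparatingRight := fun y hy => by
  have flip_eq_zero : (mulForm lam).flip y = 0 := LinearMap.ext hy
  rw [← h.antipode_leftHit y, flip_eq_zero, map_zero, LinearMap.zero_apply, map_zero]

variable [FiniteDimensional F A]

lemma antipode_injective (h : IsIntegralPair lam Λ) : Function.Injective (antipode F (A := A)) :=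
  LinearMap.injective_iff_surjective.mpr fun y => ⟨_, h.antipode_leftHit y⟩

lemma leftHit_injective (h : IsIntegralPair lam Λ) :
    Function.Injective fun f : Module.Dual F A => leftHit f Λ := by
  let Φ : Module.Dual F A →ₗ[F] A := antipode F ∘ₗ leftHit.flip Λ
  have surj : Function.Surjective Φ := fun y => ⟨_, h.antipode_leftHit y⟩
  have inj : Function.Injective Φ :=
    (LinearMap.injective_iff_surjective_of_finrank_eq_finrank
      Subspace.dual_finrank_eq).mpr surj
  exact Function.Injective.of_comp (f := antipode F) inj

lemma eq_smul_of_isLeftIntegral (h : IsIntegralPair lam Λ) {μ : Module.Dual F A}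
    (hμ : IsLeftIntegral μ) :
    μ = μ Λ • lam :=
  h.leftHit_injective <| by
    simp only [hμ Λ, map_smul, LinearMap.smul_apply, h.isLeftIntegral Λ, h.apply_eq_one, one_smul]

lemma rightHit_eq_smul (h : IsIntegralPair lam Λ) (x : A) :
    rightHit lam x = lam x • rightHit lam Λ := by
  refine Module.eval_apply_injective F (LinearMap.ext fun φ => ?_)
  have hμ : IsLeftIntegral (toConv lam * toConv φ).ofConv :=
    isLeftIntegral_iff.mpr fun ψ => by
      rw [toConv_ofConv, ← mul_assoc, isLeftIntegral_iff.mp h.isLeftIntegral, smul_mul_assoc]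
  have key := LinearMap.congr_fun (h.eq_smul_of_isLeftIntegral hμ) x
  simpa [apply_rightHit, mul_comm] using key

lemma isGroupLikeElem_rightHit (h : IsIntegralPair lam Λ) :
    IsGroupLikeElem F (rightHit lam Λ) where
  counit_eq_one := by
    have h_counit := apply_rightHit lam counit Λ
    have mul_counit : toConv lam * toConv counit = toConv lam := mul_one (toConv lam)
    rw [h_counit, mul_counit]
    exact h.apply_eq_one
  comul_eq_tmul_self := by
    set g := rightHit lam Λ with hg
    have rightHit_g (φ : Module.Dual F A) : rightHit φ g = φ g • g := by
      have conv : (toConv lam * toConv φ).ofConv = φ g • lam := by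
        ext x
        rw [← apply_rightHit, h.rightHit_eq_smul, map_smul, LinearMap.smul_apply, smul_eq_mul,
          smul_eq_mul, mul_comm]
      rw [hg, rightHit_rightHit, conv, map_smul, LinearMap.smul_apply]
    let b := Module.finBasis F A
    rw [comul_eq_sum_basis_tmul_rightHit b]
    simp only [rightHit_g, TensorProduct.tmul_smul, TensorProduct.smul_tmul',
      ← TensorProduct.sum_tmul, Module.Basis.coord_apply]
    rw [b.sum_repr]

end IsIntegralPair

lemma rightHit_mul_of_isGroupLikeElem {g : A} (hg : IsGroupLikeElem F g) (f : Module.Dual F A)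
    (x : A) : rightHit f (x * g) = rightHit ((mulForm f).flip g) x * g := by
  have comul_eq : comul (R := F) (x * g) =
      ∑ i ∈ (ℛ F x).index, ((ℛ F x).left i * g) ⊗ₜ[F] ((ℛ F x).right i * g) := by
    simp [Bialgebra.comul_mul, hg.comul_eq_tmul_self, ← (ℛ F x).eq, Finset.sum_mul]
  rw [rightHit_apply ⟨(ℛ F x).index, _, _, comul_eq.symm⟩, rightHit_apply (ℛ F x)]
  simp [mulForm_apply, Finset.sum_mul]

/-- A right integral in the dual of a Hopf algebra, written as `lam(x₁) x₂ = lam(x) 1`. -/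
def IsRightIntegral (lam : Module.Dual F A) : Prop :=
  ∀ x, rightHit lam x = lam x • 1

lemma sum_antipode_tmul_antipode {ι : Type*} {x : A} (r : Coalgebra.Repr F x ι) :
    ∑ i ∈ r.index, antipode F (r.right i) ⊗ₜ[F] antipode F (r.left i) =
      comul (R := F) (antipode F x) := by
  rw [comul_antipode, ← r.eq]
  simp

lemma antipode_leftHit_comp_antipode (f : Module.Dual F A) (x : A) :
    antipode F (leftHit (f ∘ₗ antipode F) x) = rightHit f (antipode F x) := by
  rw [leftHit_apply (ℛ F x), rightHit_apply ⟨(ℛ F x).index, _, _, sum_antipode_tmul_antipode _⟩]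
  simp

lemma antipode_rightHit_comp_antipode (f : Module.Dual F A) (x : A) :
    antipode F (rightHit (f ∘ₗ antipode F) x) = leftHit f (antipode F x) := by
  rw [rightHit_apply (ℛ F x), leftHit_apply ⟨(ℛ F x).index, _, _, sum_antipode_tmul_antipode _⟩]
  simp

lemma IsRightIntegral.comp_antipode {lam : Module.Dual F A} (h : IsRightIntegral lam)
    (hS : Function.Injective (antipode F (A := A))) : IsLeftIntegral (lam ∘ₗ antipode F) :=
  fun x => hS <| by
    rw [antipode_leftHit_comp_antipode, h, map_smul, antipode_one, LinearMap.comp_apply]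

namespace IsIntegralPair

variable {lam : Module.Dual F A} {Λ : A} [FiniteDimensional F A]

lemma isRightIntegral_mulForm_flip (h : IsIntegralPair lam Λ) :
    IsRightIntegral ((mulForm lam).flip (rightHit lam Λ)) := fun x => by
  have hg := h.isGroupLikeElem_rightHit
  set g := rightHit lam Λ
  apply hg.isUnit.mul_right_cancel
  rw [← rightHit_mul_of_isGroupLikeElem hg, h.rightHit_eq_smul, smul_mul_assoc, one_mul]
  rfl

lemma exists_apply_antipode_mul (h : IsIntegralPair lam Λ) :
    ∃ c : F, ∀ x, lam (antipode F x * rightHit lam Λ) = c * lam x :=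
  ⟨_, LinearMap.congr_fun (h.eq_smul_of_isLeftIntegral
    (h.isRightIntegral_mulForm_flip.comp_antipode h.antipode_injective))⟩

end IsIntegralPair

lemma exists_pow_eq_one_of_isGroupLikeElem [FiniteDimensional F A] {g : A}
    (hg : IsGroupLikeElem F g) : ∃ n, 0 < n ∧ g ^ n = 1 := by
  have : Finite (GroupLike F A) := (linearIndep_groupLikeVal (R := F) (A := A)).finite
  obtain ⟨n, hn, h⟩ := isOfFinOrder_iff_pow_eq_one.mp
    (isOfFinOrder_of_finite (⟨g, hg⟩ : GroupLike F A))
  exact ⟨n, hn, congrArg GroupLike.val h⟩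

namespace IsIntegralPair

variable {lam : Module.Dual F A} {Λ : A} [FiniteDimensional F A]

lemma exists_apply_mul_eq_apply_antipode (h : IsIntegralPair lam Λ)
    (nakayama : ∀ a b, lam (a * b) = lam (b * antipode F (antipode F a))) :
    ∃ c : F, ∀ x, lam (x * rightHit lam Λ) = c * lam (antipode F x) := by
  have hg := h.isGroupLikeElem_rightHit
  obtain ⟨c, hc⟩ := h.exists_apply_antipode_mul
  set g := rightHit lam Λ
  refine ⟨c, fun x => ?_⟩
  calc
    lam (x * g) = lam (antipode F (antipode F (x * g))) := by simpa using nakayama (x * g) 1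
    _ = lam (antipode F (antipode F x) * g) := by
      rw [antipode_mul_antidistrib, antipode_mul_antidistrib, hg.antipode_antipode]
    _ = c * lam (antipode F x) := hc _

/-- A form of Radford's formula for `S⁴`. -/
lemma mul_rightHit_eq (h : IsIntegralPair lam Λ)
    (nakayama : ∀ a b, lam (a * b) = lam (b * antipode F (antipode F a))) (b : A) :
    b * rightHit lam Λ =
      rightHit lam Λ * antipode F (antipode F (antipode F (antipode F b))) := by
  obtain ⟨c, hc⟩ := h.exists_apply_mul_eq_apply_antipode nakayama
  set g := rightHit lam Λ
  refine sub_eq_zero.mp (h.separatingRight _ fun x => ?_)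
  rw [map_sub, sub_eq_zero]
  calc
    lam (x * (b * g)) = c * lam (antipode F b * antipode F x) := by
      rw [← mul_assoc, hc, antipode_mul_antidistrib]
    _ = c * lam (antipode F (antipode F (antipode F b) * x)) := by
      rw [nakayama, antipode_mul_antidistrib]
    _ = lam (antipode F (antipode F b) * (x * g)) := by rw [← hc, mul_assoc]
    _ = lam (x * (g * antipode F (antipode F (antipode F (antipode F b))))) := by
      rw [nakayama, mul_assoc]

lemma exists_antipode_mul_antipode_pow_eq_one (h : IsIntegralPair lam Λ)
    (nakayama : ∀ a b, lam (a * b) = lam (b * antipode F (antipode F a))) :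
    ∃ N, 0 < N ∧ (antipode F * antipode F : Module.End F A) ^ N = 1 := by
  have hg := h.isGroupLikeElem_rightHit
  have radford := h.mul_rightHit_eq nakayama
  set g := rightHit lam Λ
  let σ : Module.End F A := antipode F * antipode F
  obtain ⟨n, hn, pow_eq_one⟩ := exists_pow_eq_one_of_isGroupLikeElem hg
  have mul_pow_eq (m : ℕ) (b : A) : b * g ^ m = g ^ m * ((σ ^ 2) ^ m) b := by
    induction m generalizing b with
    | zero => simp
    | succ m ih =>
      rw [pow_succ g, ← mul_assoc, ih, mul_assoc, radford, ← mul_assoc, pow_succ' (σ ^ 2)]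
      rfl
  refine ⟨2 * n, by lia, LinearMap.ext fun b => ?_⟩
  simpa [pow_mul, pow_eq_one] using (mul_pow_eq n b).symm

end IsIntegralPair

end Integrals

section TraceIntegral

open Coalgebra HopfAlgebra WithConv

variable (F A : Type*) [Field F] [Ring A] [HopfAlgebra F A]

/-- The functional `h ↦ Tr(x ↦ h S²(x))`, which turns out to be a left integral in the dual. -/
def traceIntegral : Module.Dual F A :=
  LinearMap.trace F A ∘ₗ LinearMap.lcomp F A (antipode F ∘ₗ antipode F) ∘ₗ LinearMap.mul F A

variable {F A}

lemma traceIntegral_apply (h : A) :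
    traceIntegral F A h =
      LinearMap.trace F A (LinearMap.mulLeft F h ∘ₗ antipode F ∘ₗ antipode F) := rfl

lemma traceIntegral_mul (a b : A) :
    traceIntegral F A (a * b) = traceIntegral F A (b * antipode F (antipode F a)) := by
  let T (y : A) : Module.End F A := LinearMap.mulLeft F y ∘ₗ antipode F ∘ₗ antipode F
  have T_mul : T (a * b) = LinearMap.mulLeft F a * T b := by
    ext x
    simp [T]
  have T_mul_antipode : T (b * antipode F (antipode F a)) = T b * LinearMap.mulLeft F a := by
    ext x
    simp [T, antipode_mul_antidistrib]
  calc
    traceIntegral F A (a * b) = LinearMap.trace F A (T (a * b)) := rfl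
    _ = LinearMap.trace F A (T (b * antipode F (antipode F a))) := by
      rw [T_mul, T_mul_antipode, LinearMap.trace_mul_comm]

lemma traceIntegral_eq_one [FiniteDimensional F A] {Λ : A}
    (hΛ : ∀ x, Λ * x = counit (R := F) x • Λ)
    (hΛ₁ : counit (R := F) Λ = 1) : traceIntegral F A Λ = 1 := by
  have h_smulRight : LinearMap.mulLeft F Λ ∘ₗ antipode F ∘ₗ antipode F =
      (counit (R := F) (A := A)).smulRight Λ := by
    ext x
    simp [hΛ]
  rw [traceIntegral_apply, h_smulRight, LinearMap.trace_smulRight, hΛ₁]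

section Basis

variable {ι : Type*} [Fintype ι] (b : Module.Basis ι F A) (φ : Module.Dual F A)

lemma lid_rTensor_comul_mul_tmul_one (y z : A) :
    TensorProduct.lid F A (φ.rTensor A (comul y * (z ⊗ₜ 1))) =
      ∑ j, φ (b j * z) • rightHit (b.coord j) y := by
  simp [comul_eq_sum_basis_tmul_rightHit b y, Finset.sum_mul]

/-- The functionals `mulForm φ (b j) ∘ S` and `b.coord j` are the two legs of the functional
`φ(x S(y))` on `A ⊗ A`. -/
lemma sum_rightHit_coord_comp_comp_rightHit (h : A) :
    ∑ j, rightHit (b.coord j) ∘ₗ (LinearMap.mulLeft F h ∘ₗ antipode F ∘ₗ antipode F) ∘ₗ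
        rightHit ((mulForm φ (b j)) ∘ₗ antipode F) =
      LinearMap.mulLeft F (rightHit φ h) ∘ₗ antipode F ∘ₗ antipode F := by
  ext x
  let r := ℛ F x
  let S := antipode F (A := A)
  let T := (TensorProduct.lid F A).toLinearMap ∘ₗ φ.rTensor A
  have comul_mul_antipode :
      ∑ i ∈ r.index, comul (R := F) (h * S (S (r.right i))) * (S (r.left i) ⊗ₜ[F] 1) =
        comul h * (1 ⊗ₜ S (S x)) := by
    simp only [Bialgebra.comul_mul, mul_assoc, ← Finset.mul_sum]
    rw [sum_comul_antipode_antipode_mul r]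
  calc
    (∑ j, rightHit (b.coord j) ∘ₗ (LinearMap.mulLeft F h ∘ₗ S ∘ₗ S) ∘ₗ
        rightHit ((mulForm φ (b j)) ∘ₗ S)) x
      = ∑ j, ∑ i ∈ r.index,
          φ (b j * S (r.left i)) • rightHit (b.coord j) (h * S (S (r.right i))) := by
        simp [rightHit_apply r, mulForm_apply]
    _ = ∑ i ∈ r.index, T (comul (h * S (S (r.right i))) * (S (r.left i) ⊗ₜ 1)) := by
      rw [Finset.sum_comm]
      exact Finset.sum_congr rfl fun i _ => (lid_rTensor_comul_mul_tmul_one b φ _ _).symm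
    _ = T (comul h * (1 ⊗ₜ S (S x))) := by rw [← map_sum, comul_mul_antipode]
    _ = rightHit φ h * S (S x) := by
      rw [rightHit_apply (ℛ F h), ← (ℛ F h).eq]
      simp [T, Finset.sum_mul]

lemma sum_toConv_coord_mul_toConv_mulForm_comp_antipode :
    ∑ j, toConv (b.coord j) * toConv ((mulForm φ (b j)) ∘ₗ antipode F) =
      φ 1 • toConv counit := by
  ext x
  let r := ℛ F x
  calc
    (∑ j, toConv (b.coord j) * toConv ((mulForm φ (b j)) ∘ₗ antipode F)) x
      = ∑ j, ∑ i ∈ r.index, b.coord j (r.left i) * φ (b j * antipode F (r.right i)) := by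
        refine (LinearMap.congr_fun (ofConv_sum _ _) x).trans ?_
        rw [LinearMap.sum_apply]
        exact Finset.sum_congr rfl fun j _ => r.convMul_apply _ _
    _ = ∑ i ∈ r.index, φ ((∑ j, b.repr (r.left i) j • b j) * antipode F (r.right i)) := by
      rw [Finset.sum_comm]
      simp only [Finset.sum_mul, map_sum, smul_mul_assoc, map_smul, smul_eq_mul,
        Module.Basis.coord_apply]
    _ = φ (∑ i ∈ r.index, r.left i * antipode F (r.right i)) := by
      simp only [b.sum_repr, map_sum]
    _ = φ 1 * counit x := by
      rw [sum_mul_antipode_eq_smul, map_smul, smul_eq_mul, mul_comm]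

lemma sum_rightHit_comp_rightHit_coord :
    ∑ j, rightHit ((mulForm φ (b j)) ∘ₗ antipode F) ∘ₗ rightHit (b.coord j) =
      φ 1 • LinearMap.id := by
  have conv := congrArg ofConv (sum_toConv_coord_mul_toConv_mulForm_comp_antipode b φ)
  ext x
  calc
    (∑ j, rightHit ((mulForm φ (b j)) ∘ₗ antipode F) ∘ₗ rightHit (b.coord j)) x
      = rightHit (∑ j, toConv (b.coord j) *
          toConv ((mulForm φ (b j)) ∘ₗ antipode F)).ofConv x := by
        simp [rightHit_rightHit]
    _ = φ 1 • x := by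
      rw [conv, ofConv_smul, map_smul, LinearMap.smul_apply, ofConv_toConv, rightHit_counit]

end Basis

lemma isLeftIntegral_traceIntegral [FiniteDimensional F A] :
    IsLeftIntegral (traceIntegral F A) := by
  rw [isLeftIntegral_iff]
  intro φ
  ext h
  let b := Module.finBasis F A
  let B := LinearMap.mulLeft F h ∘ₗ antipode F ∘ₗ antipode F
  let ψ (j) : Module.Dual F A := (mulForm φ (b j)) ∘ₗ antipode F
  calc
    (toConv φ * toConv (traceIntegral F A)) h
      = LinearMap.trace F A (LinearMap.mulLeft F (rightHit φ h) ∘ₗ antipode F ∘ₗ antipode F) := by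
        rw [← apply_rightHit, traceIntegral_apply]
    _ = ∑ j, LinearMap.trace F A (rightHit (b.coord j) ∘ₗ B ∘ₗ rightHit (ψ j)) := by
      rw [← sum_rightHit_coord_comp_comp_rightHit b φ, map_sum]
    _ = ∑ j, LinearMap.trace F A (B ∘ₗ rightHit (ψ j) ∘ₗ rightHit (b.coord j)) := by
      refine Finset.sum_congr rfl fun j _ => ?_
      rw [LinearMap.trace_comp_comm', LinearMap.comp_assoc]
    _ = φ 1 • traceIntegral F A h := by
      have sum_comp : ∑ j, B ∘ₗ rightHit (ψ j) ∘ₗ rightHit (b.coord j) =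
          B ∘ₗ ∑ j, rightHit (ψ j) ∘ₗ rightHit (b.coord j) := (Finset.mul_sum _ _ B).symm
      rw [← map_sum, sum_comp, sum_rightHit_comp_rightHit_coord b φ, LinearMap.comp_smul,
        LinearMap.comp_id, map_smul, traceIntegral_apply]

end TraceIntegral

section RootsOfUnity

variable {F : Type*} [Field F] [CharZero F]

/-- Embedding the algebraic numbers of `F` into `ℂ` turns each summand into a squared norm. -/
lemma sum_eq_zero_of_sum_sum_mul_sum_inv_eq_zero {ι : Type*} [Fintype ι] {κ : ι → Type*}
    [∀ i, Fintype (κ i)] {n : ℕ} (hn : n ≠ 0) {μ : ∀ i, κ i → F} (hμ : ∀ i j, μ i j ^ n = 1)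
    (hsum : ∑ i, (∑ j, μ i j) * (∑ j, (μ i j)⁻¹) = 0) (i : ι) : ∑ j, μ i j = 0 := by
  let E := algebraicClosure ℚ F
  have isAlgebraic (i : ι) (j : κ i) : μ i j ∈ E :=
    mem_algebraicClosure_iff.mpr
      (IsIntegral.of_pow (Nat.pos_of_ne_zero hn) (hμ i j ▸ isIntegral_one)).isAlgebraic
  have : Algebra.IsAlgebraic ℚ E := algebraicClosure.isAlgebraic ℚ F
  let τ : E →ₐ[ℚ] ℂ := IsAlgClosed.lift
  let ν (i : ι) (j : κ i) : E := ⟨μ i j, isAlgebraic i j⟩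
  have τ_inv (i : ι) (j : κ i) : τ (ν i j)⁻¹ = starRingEnd ℂ (τ (ν i j)) := by
    have ν_pow : ν i j ^ n = 1 := Subtype.ext (hμ i j)
    rw [map_inv₀, Complex.inv_eq_conj (Complex.norm_eq_one_of_pow_eq_one
      (by rw [← map_pow, ν_pow, map_one]) hn)]
  have sum_ν : ∑ i, (∑ j, ν i j) * (∑ j, (ν i j)⁻¹) = 0 := by
    apply Subtype.ext
    simpa [ν] using hsum
  have sum_normSq : ∑ i, Complex.normSq (τ (∑ j, ν i j)) = 0 := by
    have h := congrArg τ sum_ν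
    simp only [map_sum, map_mul, τ_inv, map_zero] at h
    simp only [← map_sum, Complex.mul_conj] at h
    exact_mod_cast h
  have normSq_eq_zero := (Finset.sum_eq_zero_iff_of_nonneg fun i _ =>
    Complex.normSq_nonneg _).mp sum_normSq i (Finset.mem_univ i)
  have sum_ν_eq_zero : ∑ j, ν i j = 0 :=
    (map_eq_zero τ).mp (Complex.normSq_eq_zero.mp normSq_eq_zero)
  simpa [ν] using congrArg Subtype.val sum_ν_eq_zero

end RootsOfUnity

section FiniteOrder

lemma trace_eq_sum_of_forall_eq_smul {F V κ : Type*} [Field F] [AddCommGroup V] [Module F V]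
    [Fintype κ] (b : Module.Basis κ F V) {f : Module.End F V} {μ : κ → F}
    (h : ∀ i, f (b i) = μ i • b i) :
    LinearMap.trace F V f = ∑ i, μ i := by
  classical
  rw [LinearMap.trace_eq_matrix_trace F b, Matrix.trace]
  simp [LinearMap.toMatrix_apply, h]

variable {F : Type*} [Field F] [CharZero F] [IsAlgClosed F]

lemma exists_basis_forall_eq_smul_of_pow_eq_one {V : Type*} [AddCommGroup V] [Module F V]
    [FiniteDimensional F V] {f : Module.End F V} {n : ℕ} (hn : n ≠ 0) (hf : f ^ n = 1) :
    ∃ (b : Module.Basis (Fin (Module.finrank F V)) F V) (μ : Fin (Module.finrank F V) → F),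
      ∀ i, f (b i) = μ i • b i := by
  classical
  have semisimple : f.IsSemisimple := by
    refine Module.End.isSemisimple_of_squarefree_aeval_eq_zero (p := Polynomial.X ^ n - 1)
      (Polynomial.X_pow_sub_one_separable_iff.mpr (by exact_mod_cast hn)).squarefree ?_
    simp [hf]
  have internal := DirectSum.isInternal_submodule_of_iSupIndep_of_iSup_eq_top
    f.eigenspaces_iSupIndep semisimple.iSup_eigenspace_eq_top
  let b := internal.collectedBasis fun μ => Module.finBasis F (f.eigenspace μ)
  have := Module.Finite.finite_basis b
  have := Fintype.ofFinite (Σ μ, Fin (Module.finrank F (f.eigenspace μ)))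
  let e := Fintype.equivFinOfCardEq (Module.finrank_eq_card_basis b).symm
  refine ⟨b.reindex e, fun i => (e.symm i).1, fun i => ?_⟩
  rw [Module.Basis.reindex_apply]
  exact Module.End.mem_eigenspace_iff.mp (internal.collectedBasis_mem _ _)

lemma exists_trace_eq_sum_of_pow_eq_one {V : Type*} [AddCommGroup V] [Module F V]
    [FiniteDimensional F V] {f g : Module.End F V} {n : ℕ} (hn : n ≠ 0) (hf : f ^ n = 1)
    (hgf : g * f = 1) :
    ∃ μ : Fin (Module.finrank F V) → F, (∀ i, μ i ^ n = 1) ∧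
      LinearMap.trace F V f = ∑ i, μ i ∧ LinearMap.trace F V g = ∑ i, (μ i)⁻¹ := by
  obtain ⟨b, μ, hμ⟩ := exists_basis_forall_eq_smul_of_pow_eq_one hn hf
  have μ_pow (i) : μ i ^ n = 1 := by
    have h : f.HasEigenvector (μ i) (b i) := ⟨Module.End.mem_eigenspace_iff.mpr (hμ i), b.ne_zero i⟩
    have h_pow := h.pow_apply n
    rw [hf, Module.End.one_apply] at h_pow
    exact smul_left_injective F (b.ne_zero i) (h_pow.symm.trans (one_smul F _).symm)
  have μ_ne_zero (i) : μ i ≠ 0 := fun h => by simpa [h, hn] using μ_pow i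
  have hg (i) : g (b i) = (μ i)⁻¹ • b i := by
    rw [eq_inv_smul_iff₀ (μ_ne_zero i), ← map_smul, ← hμ]
    exact LinearMap.congr_fun hgf (b i)
  exact ⟨μ, μ_pow, trace_eq_sum_of_forall_eq_smul b hμ, trace_eq_sum_of_forall_eq_smul b hg⟩

end FiniteOrder

section NakayamaAutomorphism

variable {F A : Type*} [Field F] [Ring A] [Algebra F A]

/-- The unit `w` is the density of `lam` with respect to the trace form `T`. -/
lemma exists_conj_eq_of_nakayama [FiniteDimensional F A] {T lam : Module.Dual F A}
    (T_comm : ∀ a b, T (a * b) = T (b * a)) (hT : (mulForm T).SeparatingRight)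
    (hlam : (mulForm lam).SeparatingRight) {σ : A → A}
    (nakayama : ∀ a b, lam (a * b) = lam (b * σ a)) :
    ∃ w v : A, w * v = 1 ∧ v * w = 1 ∧ ∀ a, σ a = w * a * v := by
  have hT' (y : A) (hy : ∀ x, T (y * x) = 0) : y = 0 :=
    hT y fun x => (T_comm x y).trans (hy x)
  have surj : Function.Surjective (mulForm T) :=
    (LinearMap.injective_iff_surjective_of_finrank_eq_finrank
      Subspace.dual_finrank_eq.symm).mp <|
      (injective_iff_map_eq_zero _).mpr fun y hy => hT' y (LinearMap.congr_fun hy)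
  obtain ⟨w, hw⟩ := surj lam
  have lam_apply (x : A) : lam x = T (w * x) := (LinearMap.congr_fun hw x).symm
  have w_mul (a : A) : w * a = σ a * w := by
    refine sub_eq_zero.mp (hT' _ fun b => ?_)
    rw [sub_mul, map_sub, sub_eq_zero, mul_assoc, ← lam_apply, nakayama, lam_apply, ← mul_assoc,
      T_comm, ← mul_assoc]
  have inj : Function.Injective (LinearMap.mulRight F w) :=
    (injective_iff_map_eq_zero _).mpr fun y hy => hlam y fun a => by
      rw [LinearMap.mulRight_apply] at hy
      rw [mulForm_apply, lam_apply, T_comm, mul_assoc, hy, mul_zero, map_zero]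
  obtain ⟨v, hv⟩ := LinearMap.injective_iff_surjective.mp inj 1
  have v_mul_w : v * w = 1 := hv
  have w_mul_v : w * v = 1 := inj (by simp [mul_assoc, v_mul_w])
  exact ⟨w, v, w_mul_v, v_mul_w, fun a => by rw [w_mul, mul_assoc, w_mul_v, mul_one]⟩

lemma commute_pow_of_mulLeft_mul_mulRight_pow_eq_one {w v : A} (h : v * w = 1) {N : ℕ}
    (hN : (LinearMap.mulLeft F w * LinearMap.mulRight F v : Module.End F A) ^ N = 1) (x : A) :
    Commute (v ^ N) x := by
  have h_comm : Commute (LinearMap.mulLeft F w) (LinearMap.mulRight F v) :=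
    LinearMap.commute_mulLeft_right w v
  rw [h_comm.mul_pow, LinearMap.pow_mulLeft, LinearMap.pow_mulRight] at hN
  have h_pow : v ^ N * w ^ N = 1 := pow_mul_pow_eq_one N h
  have h_x : w ^ N * (x * v ^ N) = x := LinearMap.congr_fun hN x
  calc
    v ^ N * x = v ^ N * (w ^ N * (x * v ^ N)) := by rw [h_x]
    _ = x * v ^ N := by rw [← mul_assoc, h_pow, one_mul]

end NakayamaAutomorphism

section PiMatrix

variable {F : Type*} [Field F] {ι : Type*} {n : ι → Type*}
  [∀ i, Fintype (n i)]

lemma trace_mulLeft_mul_mulRight [Fintype ι] (w v : ∀ i, Matrix (n i) (n i) F) :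
    LinearMap.trace F _ (LinearMap.mulLeft F w * LinearMap.mulRight F v) =
      ∑ i, (w i).trace * (v i).trace := by
  classical
  have repr_apply (i : ι) (x : Matrix (n i) (n i) F) (a b : n i) :
      (Matrix.stdBasis F (n i) (n i)).repr x (a, b) = x a b := rfl
  have single_entry (i : ι) (a b : n i) :
      (w i * (Matrix.single a b (1 : F) * v i) : Matrix (n i) (n i) F) a b = w i a a * v i b b := by
    rw [Matrix.mul_apply, Finset.sum_eq_single a
      (fun c _ hc => by rw [Matrix.single_mul_apply_of_ne _ _ _ _ _ hc, mul_zero]) (by simp),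
      Matrix.single_mul_apply_same, one_mul]
  rw [LinearMap.trace_eq_matrix_trace F (Pi.basis fun i => Matrix.stdBasis F (n i) (n i))]
  simp only [Matrix.trace, Matrix.diag_apply, LinearMap.toMatrix_apply, Fintype.sum_sigma,
    Fintype.sum_prod_type, Finset.sum_mul_sum]
  refine Finset.sum_congr rfl fun i _ => Finset.sum_congr rfl fun a _ =>
    Finset.sum_congr rfl fun b _ => ?_
  rw [Pi.basis_repr, repr_apply, Pi.basis_apply, Matrix.stdBasis_eq_single]
  simp only [Module.End.mul_apply, LinearMap.mulLeft_apply, LinearMap.mulRight_apply,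
    Pi.mul_apply, Pi.single_eq_same]
  exact single_entry i a b

variable [∀ i, DecidableEq (n i)]

lemma exists_eq_smul_one_of_forall_commute {z : ∀ i, Matrix (n i) (n i) F}
    (h : ∀ x, Commute z x) (i : ι) : ∃ c : F, z i = c • 1 := by
  classical
  obtain ⟨c, hc⟩ := Matrix.mem_range_scalar_of_commute_single (M := z i) fun a b _ => by
    simpa [Commute, SemiconjBy] using
      (congrFun (h (Pi.single i (Matrix.single a b 1))).eq i).symm
  exact ⟨c, by rw [← hc, Matrix.smul_one_eq_diagonal]; rfl⟩

variable [CharZero F] [IsAlgClosed F] [Fintype ι]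

lemma trace_eq_zero_of_pow_eq_smul_one [∀ i, Nonempty (n i)] {u v : ∀ i, Matrix (n i) (n i) F}
    {N : ℕ} (hN : N ≠ 0) (hvu : v * u = 1) {c : ι → F} (hu : ∀ i, u i ^ N = c i • 1)
    (hsum : ∑ i, (u i).trace * (v i).trace = 0) (i : ι) : (u i).trace = 0 := by
  have v_mul_u (i : ι) : v i * u i = 1 := congrFun hvu i
  choose r hr using fun i => IsAlgClosed.exists_pow_nat_eq (c i) (Nat.pos_of_ne_zero hN)
  have hc (i : ι) : c i ≠ 0 := fun h => by
    have h_pow := pow_mul_pow_eq_one N (v_mul_u i)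
    simp [hu, h] at h_pow
  have hr₀ (i : ι) : r i ≠ 0 := fun h => hc i (by rw [← hr, h, zero_pow hN])
  let f (i : ι) : Module.End F (n i → F) := Matrix.toLinAlgEquiv' ((r i)⁻¹ • u i)
  let g (i : ι) : Module.End F (n i → F) := Matrix.toLinAlgEquiv' (r i • v i)
  have f_pow (i : ι) : f i ^ N = 1 := by
    rw [← map_pow, smul_pow, hu, smul_smul, inv_pow, hr, inv_mul_cancel₀ (hc i), one_smul, map_one]
  have g_mul_f (i : ι) : g i * f i = 1 := by
    rw [← map_mul, smul_mul_smul_comm, v_mul_u, mul_inv_cancel₀ (hr₀ i), one_smul, map_one]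
  have trace_f (i : ι) : LinearMap.trace F _ (f i) = (r i)⁻¹ * (u i).trace :=
    (Matrix.trace_toLin'_eq _).trans (Matrix.trace_smul _ _)
  have trace_g (i : ι) : LinearMap.trace F _ (g i) = r i * (v i).trace :=
    (Matrix.trace_toLin'_eq _).trans (Matrix.trace_smul _ _)
  choose μ μ_pow sum_μ sum_μ_inv using
    fun i => exists_trace_eq_sum_of_pow_eq_one hN (f_pow i) (g_mul_f i)
  have h := sum_eq_zero_of_sum_sum_mul_sum_inv_eq_zero hN μ_pow
    (by
      simp only [← sum_μ, ← sum_μ_inv, trace_f, trace_g, mul_mul_mul_comm (r _)⁻¹,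
        inv_mul_cancel₀ (hr₀ _), one_mul, hsum]) i
  rwa [← sum_μ, trace_f, mul_eq_zero_iff_left (inv_ne_zero (hr₀ i))] at h

end PiMatrix

section SemisimpleAlgebra

variable {F A : Type*} [Field F] [IsAlgClosed F] [Ring A] [Algebra F A]
  [FiniteDimensional F A] [IsSemisimpleRing A]

variable (F A) in
lemma exists_separatingRight_mulForm :
    ∃ T : Module.Dual F A, (∀ a b, T (a * b) = T (b * a)) ∧ (mulForm T).SeparatingRight := by
  obtain ⟨m, d, _, ⟨e⟩⟩ := IsSemisimpleRing.exists_algEquiv_pi_matrix_of_isAlgClosed F A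
  let T : Module.Dual F A :=
    ∑ i, Matrix.traceLinearMap (Fin (d i)) F F ∘ₗ LinearMap.proj i ∘ₗ e.toLinearMap
  have T_apply (x : A) : T x = ∑ i, (e x i).trace := by simp [T, LinearMap.sum_apply]
  refine ⟨T, fun a b => ?_, fun y hy => ?_⟩
  · simp only [T_apply, map_mul, Pi.mul_apply, Matrix.trace_mul_comm (e a _)]
  · refine (map_eq_zero_iff e e.injective).mp <|
      funext fun i => Matrix.ext_iff_trace_mul_left.mpr fun x => ?_
    have h := hy (e.symm (Pi.single i x))
    rw [mulForm_apply, T_apply, Finset.sum_eq_single i (fun j _ hj => by simp [hj]) (by simp)] at h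
    simpa using h

variable [CharZero F]

/-- If `σ` is conjugation by a unit and has finite order, then `Tr σ` is a sum of squared norms:
its vanishing makes the trace of the unit on every simple module vanish. -/
lemma trace_mulLeft_mul_mulRight_eq_zero {w v : A} (hwv : w * v = 1) (hvw : v * w = 1) {N : ℕ}
    (hN : N ≠ 0)
    (h_pow : (LinearMap.mulLeft F w * LinearMap.mulRight F v : Module.End F A) ^ N = 1)
    (h_trace : LinearMap.trace F A (LinearMap.mulLeft F w * LinearMap.mulRight F v) = 0) (x : A) :
    LinearMap.trace F A (LinearMap.mulLeft F x * LinearMap.mulRight F v) = 0 := by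
  obtain ⟨m, d, hd, ⟨e⟩⟩ := IsSemisimpleRing.exists_algEquiv_pi_matrix_of_isAlgClosed F A
  have trace_eq (a b : A) :
      LinearMap.trace F A (LinearMap.mulLeft F a * LinearMap.mulRight F b) =
        ∑ i, (e a i).trace * (e b i).trace := by
    rw [← trace_mulLeft_mul_mulRight, ← LinearMap.trace_conj' _ e.toLinearEquiv]
    congr 1
    refine LinearMap.ext fun x => ?_
    simp [LinearEquiv.conj_apply]
  have v_pow_commute (x : ∀ i, Matrix (Fin (d i)) (Fin (d i)) F) : Commute (e v ^ N) x := by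
    simpa using (commute_pow_of_mulLeft_mul_mulRight_pow_eq_one hvw h_pow (e.symm x)).map e
  choose c hc using exists_eq_smul_one_of_forall_commute v_pow_commute
  have trace_v := trace_eq_zero_of_pow_eq_smul_one (u := e v) (v := e w) hN
    (by rw [← map_mul, hwv, map_one]) hc
    (by
      rw [← h_trace, trace_eq]
      simp only [mul_comm])
  rw [trace_eq]
  simp [trace_v]

end SemisimpleAlgebra

section Integral

open Coalgebra HopfAlgebra

lemma exists_forall_mul_eq_smul_of_isSemisimpleRing {F R : Type*} [Field F] [Ring R] [Algebra F R]
    [IsSemisimpleRing R] (ε : R →ₐ[F] F) : ∃ Λ : R, ε Λ = 1 ∧ ∀ x, x * Λ = ε x • Λ := by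
  obtain ⟨e, he, h_span⟩ := IsSemisimpleRing.ideal_eq_span_idempotent (RingHom.ker ε)
  have e_mem : ε e = 0 :=
    (RingHom.mem_ker (f := ε)).mp (h_span ▸ Ideal.mem_span_singleton_self e)
  refine ⟨1 - e, by rw [map_sub, map_one, e_mem, sub_zero], fun x => ?_⟩
  have h_mem : x - algebraMap F R (ε x) ∈ RingHom.ker ε := by simp [RingHom.mem_ker]
  obtain ⟨r, hr⟩ := Ideal.mem_span_singleton'.mp (h_span ▸ h_mem)
  rw [Algebra.smul_def, ← sub_eq_zero, ← sub_mul, ← hr, mul_assoc, he.mul_one_sub_self, mul_zero]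

variable {F A : Type*} [Field F] [Ring A] [HopfAlgebra F A] [FiniteDimensional F A]
  [IsSemisimpleRing A]

variable (F A) in
lemma exists_isIntegralPair_traceIntegral : ∃ Λ : A, IsIntegralPair (traceIntegral F A) Λ := by
  obtain ⟨Λ, counit_Λ, hΛ⟩ := exists_forall_mul_eq_smul_of_isSemisimpleRing
    ((Bialgebra.counitAlgHom F A).fromOpposite fun _ _ => Commute.all _ _)
  have mul_eq (x : A) : Λ.unop * x = counit (R := F) x • Λ.unop :=
    congrArg MulOpposite.unop (hΛ (.op x))
  exact ⟨Λ.unop, isLeftIntegral_traceIntegral, mul_eq, traceIntegral_eq_one mul_eq counit_Λ⟩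

variable [IsAlgClosed F] [CharZero F]

variable (F A) in
theorem traceIntegral_one_ne_zero : traceIntegral F A 1 ≠ 0 := by
  intro h_one
  obtain ⟨Λ, hΛ⟩ := exists_isIntegralPair_traceIntegral F A
  obtain ⟨T, T_comm, hT⟩ := exists_separatingRight_mulForm F A
  obtain ⟨w, v, hwv, hvw, h_conj⟩ :=
    exists_conj_eq_of_nakayama T_comm hT hΛ.separatingRight traceIntegral_mul
  have antipode_sq : antipode F * antipode F = LinearMap.mulLeft F w * LinearMap.mulRight F v :=
    LinearMap.ext fun a => (h_conj a).trans (mul_assoc w a v)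
  obtain ⟨N, hN, h_pow⟩ := hΛ.exists_antipode_mul_antipode_pow_eq_one traceIntegral_mul
  have traceIntegral_eq (a : A) : traceIntegral F A a =
      LinearMap.trace F A (LinearMap.mulLeft F (a * w) * LinearMap.mulRight F v) := by
    rw [LinearMap.mulLeft_mul, ← Module.End.mul_eq_comp, mul_assoc, ← antipode_sq]
    rfl
  have h_trace := trace_mulLeft_mul_mulRight_eq_zero hwv hvw hN.ne' (antipode_sq ▸ h_pow)
    (by rw [← one_mul w, ← traceIntegral_eq, h_one]) (Λ * w)
  rw [← traceIntegral_eq, hΛ.apply_eq_one] at h_trace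
  exact one_ne_zero h_trace

end Integral

section Separability

variable {F B V : Type*} [Field F] [Ring B] [Algebra F B] [AddCommGroup V] [Module F V]
  [Module B V] [IsScalarTower F B V]

/-- A linear projection onto a submodule becomes `B`-linear after averaging over the separability
idempotent `z`. -/
lemma isSemisimpleModule_of_rTensor_mulLeft_eq_lTensor_mulRight {z : B ⊗[F] B}
    (mul_z : LinearMap.mul' F B z = 1)
    (hz : ∀ f : B, (LinearMap.mulLeft F f).rTensor B z = (LinearMap.mulRight F f).lTensor B z) :
    IsSemisimpleModule B V := by
  refine (isSemisimpleModule_iff B V).mpr ⟨fun N => ?_⟩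
  obtain ⟨p, hp⟩ := LinearMap.exists_leftInverse_of_injective (N.subtype.restrictScalars F)
    (LinearMap.ker_eq_bot.mpr N.injective_subtype)
  have p_apply (y : N) : p y = y := LinearMap.congr_fun hp y
  let average : V →ₗ[F] B ⊗[F] B →ₗ[F] N :=
    (TensorProduct.lift (Algebra.lsmul F F N).toLinearMap).compRight F ∘ₗ LinearMap.lTensorHom B ∘ₗ
      p.compRight F ∘ₗ (Algebra.lsmul F F V).toLinearMap.flip
  have average_tmul (x : V) (a b : B) : average x (a ⊗ₜ b) = a • p (b • x) := rfl
  have average_smul (f : B) (x : V) (t : B ⊗[F] B) :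
      average (f • x) t = average x ((LinearMap.mulRight F f).lTensor B t) := by
    induction t with
    | zero => simp
    | add s t hs ht => simp only [map_add, hs, ht]
    | tmul a b => simp [average_tmul, mul_smul]
  have smul_average (f : B) (x : V) (t : B ⊗[F] B) :
      average x ((LinearMap.mulLeft F f).rTensor B t) = f • average x t := by
    induction t with
    | zero => simp
    | add s t hs ht => simp only [map_add, smul_add, hs, ht]
    | tmul a b => simp [average_tmul, mul_smul]
  have average_apply (y : N) (t : B ⊗[F] B) : average y t = LinearMap.mul' F B t • y := by
    induction t with
    | zero => simp
    | add s t hs ht => rw [map_add, map_add, hs, ht, add_smul]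
    | tmul a b =>
      rw [average_tmul, ← N.coe_smul, p_apply, LinearMap.mul'_apply, mul_smul]
  let P : V →ₗ[B] N :=
    { toFun x := average x z
      map_add' x y := by rw [map_add, LinearMap.add_apply]
      map_smul' f x := by rw [average_smul, ← hz, smul_average, RingHom.id_apply] }
  exact ⟨LinearMap.ker P, LinearMap.isCompl_of_proj fun y =>
    (average_apply y z).trans (by rw [mul_z, one_smul])⟩

end Separability

section Dual

open Coalgebra HopfAlgebra WithConv

variable {F A : Type*} [Field F]

section Coalgebra

variable [AddCommGroup A] [Module F A] [FiniteDimensional F A]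

variable (F A) in
/-- The identification of `A* ⊗ A*` with `(A ⊗ A)*`. -/
def dualTensorEquiv :
    WithConv (A →ₗ[F] F) ⊗[F] WithConv (A →ₗ[F] F) ≃ₗ[F] Module.Dual F (A ⊗[F] A) :=
  TensorProduct.congr (WithConv.linearEquiv F _) (WithConv.linearEquiv F _) ≪≫ₗ
    TensorProduct.dualDistribEquiv F A A

lemma dualTensorEquiv_tmul_tmul (f g : WithConv (A →ₗ[F] F)) (x y : A) :
    dualTensorEquiv F A (f ⊗ₜ g) (x ⊗ₜ y) = f x * g y := rfl

variable [Coalgebra F A]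

lemma mul'_apply_eq_dualTensorEquiv_comul (z : WithConv (A →ₗ[F] F) ⊗[F] WithConv (A →ₗ[F] F))
    (x : A) :
    LinearMap.mul' F (WithConv (A →ₗ[F] F)) z x = dualTensorEquiv F A z (comul x) := by
  induction z with
  | zero => simp
  | add s t hs ht =>
    rw [map_add, map_add, LinearMap.add_apply, ← hs, ← ht]
    rfl
  | tmul f g =>
    rw [LinearMap.mul'_apply, (ℛ F x).convMul_apply, ← (ℛ F x).eq, map_sum]
    rfl

lemma dualTensorEquiv_rTensor_mulLeft (f : WithConv (A →ₗ[F] F))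
    (z : WithConv (A →ₗ[F] F) ⊗[F] WithConv (A →ₗ[F] F)) (x y : A) :
    dualTensorEquiv F A ((LinearMap.mulLeft F f).rTensor _ z) (x ⊗ₜ y) =
      dualTensorEquiv F A z (rightHit f.ofConv x ⊗ₜ y) := by
  induction z with
  | zero => simp
  | add s t hs ht => simp only [map_add, LinearMap.add_apply, hs, ht]
  | tmul g g' =>
    rw [LinearMap.rTensor_tmul, dualTensorEquiv_tmul_tmul, dualTensorEquiv_tmul_tmul]
    exact congrArg (· * g' y) (apply_rightHit f.ofConv g.ofConv x).symm

lemma dualTensorEquiv_lTensor_mulRight (f : WithConv (A →ₗ[F] F))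
    (z : WithConv (A →ₗ[F] F) ⊗[F] WithConv (A →ₗ[F] F)) (x y : A) :
    dualTensorEquiv F A ((LinearMap.mulRight F f).lTensor _ z) (x ⊗ₜ y) =
      dualTensorEquiv F A z (x ⊗ₜ leftHit f.ofConv y) := by
  induction z with
  | zero => simp
  | add s t hs ht => simp only [map_add, LinearMap.add_apply, hs, ht]
  | tmul g g' =>
    rw [LinearMap.lTensor_tmul, dualTensorEquiv_tmul_tmul, dualTensorEquiv_tmul_tmul]
    exact congrArg (g x * ·) (apply_leftHit f.ofConv g'.ofConv y).symm

end Coalgebra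

variable [Ring A] [HopfAlgebra F A]

lemma IsIntegralPair.apply_rightHit_mul_antipode [FiniteDimensional F A] {lam : Module.Dual F A}
    {Λ : A} (h : IsIntegralPair lam Λ)
    (nakayama : ∀ a b, lam (a * b) = lam (b * antipode F (antipode F a)))
    (f : Module.Dual F A) (x y : A) :
    lam (rightHit f x * antipode F y) = lam (x * antipode F (leftHit f y)) := by
  obtain ⟨w, rfl⟩ : ∃ w, antipode F w = y := ⟨_, h.antipode_leftHit y⟩
  have apply_mul (g : Module.Dual F A) (u v : A) :
      lam (u * rightHit g v) = g (leftHit (mulForm lam u) v) :=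
    (apply_rightHit g (mulForm lam u) v).trans (apply_leftHit (mulForm lam u) g v).symm
  have apply_mul_flip (g : Module.Dual F A) (u v : A) :
      lam (rightHit g v * u) = g (leftHit ((mulForm lam).flip u) v) :=
    (apply_rightHit g ((mulForm lam).flip u) v).trans
      (apply_leftHit ((mulForm lam).flip u) g v).symm
  calc
    lam (rightHit f x * antipode F (antipode F w)) = f (leftHit (mulForm lam w) x) := by
      rw [← nakayama, apply_mul]
    _ = f (antipode F (leftHit ((mulForm lam).flip x) w)) := by
      rw [h.isLeftIntegral.antipode_leftHit]
    _ = lam (rightHit (f ∘ₗ antipode F) w * x) := (apply_mul_flip (f ∘ₗ antipode F) x w).symm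
    _ = lam (x * antipode F (leftHit f (antipode F w))) := by
      rw [nakayama, antipode_rightHit_comp_antipode]

variable [FiniteDimensional F A] [IsAlgClosed F] [CharZero F] [IsSemisimpleRing A]

variable (F A) in
/-- The Larson–Radford theorem. -/
theorem isSemisimpleRing_withConv_dual : IsSemisimpleRing (WithConv (A →ₗ[F] F)) := by
  obtain ⟨Λ, hΛ⟩ := exists_isIntegralPair_traceIntegral F A
  have ne_zero := traceIntegral_one_ne_zero F A
  set lam := traceIntegral F A
  let form : Module.Dual F (A ⊗[F] A) :=
    (lam 1)⁻¹ • (lam ∘ₗ LinearMap.mul' F A ∘ₗ (antipode F).lTensor A)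
  have form_tmul (x y : A) : form (x ⊗ₜ y) = (lam 1)⁻¹ * lam (x * antipode F y) := rfl
  let z := (dualTensorEquiv F A).symm form
  have dualTensorEquiv_z : dualTensorEquiv F A z = form := LinearEquiv.apply_symm_apply _ _
  refine isSemisimpleModule_of_rTensor_mulLeft_eq_lTensor_mulRight (F := F) (z := z)
    (WithConv.ext (LinearMap.ext fun x => ?_)) fun f =>
      (dualTensorEquiv F A).injective (TensorProduct.ext' fun x y => ?_)
  · calc
      LinearMap.mul' F (WithConv (A →ₗ[F] F)) z x = form (comul x) := by
        rw [mul'_apply_eq_dualTensorEquiv_comul, dualTensorEquiv_z]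
      _ = (lam 1)⁻¹ * lam (counit (R := F) x • 1) := by
        rw [← sum_mul_antipode_eq_smul (ℛ F x), ← (ℛ F x).eq, map_sum, map_sum, Finset.mul_sum]
        simp only [form_tmul]
      _ = counit x := by
        rw [map_smul, smul_eq_mul, mul_left_comm, inv_mul_cancel₀ ne_zero, mul_one]
  · rw [dualTensorEquiv_rTensor_mulLeft, dualTensorEquiv_lTensor_mulRight, dualTensorEquiv_z,
      form_tmul, form_tmul, hΛ.apply_rightHit_mul_antipode traceIntegral_mul]

end Dual

section TwoSidedIdeal

lemma sInf_coatoms_twoSidedIdeal_eq_bot (R : Type*) [Ring R] [IsSemisimpleRing R] :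
    sInf {I : TwoSidedIdeal R | IsCoatom I} = ⊥ := by
  let fullyInvariantIso : {I : Ideal R // I.IsTwoSided} ≃o fullyInvariantSubmodule R R :=
    { Equiv.subtypeEquivRight fun _ => isFullyInvariant_iff_isTwoSided.symm with
      map_rel_iff' := Iff.rfl }
  let e : TwoSidedIdeal R ≃o Set (isotypicComponents R R) :=
    (TwoSidedIdeal.orderIsoIsTwoSided.trans fullyInvariantIso).trans
      OrderIso.setIsotypicComponents.symm
  obtain ⟨S, bot_eq, hS⟩ := eq_sInf_coatoms (⊥ : Set (isotypicComponents R R))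
  refine eq_bot_iff.mpr (e.le_iff_le.mp ?_)
  rw [OrderIso.map_bot, bot_eq]
  exact le_sInf fun s hs => (e.le_symm_apply).mp (sInf_le ((e.symm.isCoatom_iff s).mpr (hS s hs)))

end TwoSidedIdeal

section SimpleSubcoalgebras

open Coalgebra WithConv

variable {F A : Type} [Field F] [Ring A] [HopfAlgebra F A]

lemma IsSubcoalgebra.leftHit_mem {D : Submodule F A} (hD : IsSubcoalgebra F A D)
    (f : Module.Dual F A) {x : A} (hx : x ∈ D) : leftHit f x ∈ D := by
  obtain ⟨z, hz⟩ := hD x hx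
  change TensorProduct.rid F A (f.lTensor A (comul x)) ∈ D
  rw [← hz]
  clear hz
  induction z with
  | zero => simp
  | add y z hy hz => simpa only [map_add] using add_mem hy hz
  | tmul y z => exact D.smul_mem (f z) y.2

lemma IsSubcoalgebra.rightHit_mem {D : Submodule F A} (hD : IsSubcoalgebra F A D)
    (f : Module.Dual F A) {x : A} (hx : x ∈ D) : rightHit f x ∈ D := by
  obtain ⟨z, hz⟩ := hD x hx
  change TensorProduct.lid F A (f.rTensor A (comul x)) ∈ D
  rw [← hz]
  clear hz
  induction z with
  | zero => simp
  | add y z hy hz => simpa only [map_add] using add_mem hy hz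
  | tmul y z => exact D.smul_mem (f y) z.2

/-- The annihilator of a subcoalgebra, as a two-sided ideal of the convolution algebra. -/
def IsSubcoalgebra.annihilator {D : Submodule F A} (hD : IsSubcoalgebra F A D) :
    TwoSidedIdeal (WithConv (A →ₗ[F] F)) :=
  .mk' {f | ∀ x ∈ D, f x = 0} (fun _ _ => rfl)
    (fun hf hg x hx => (congrArg₂ (· + ·) (hf x hx) (hg x hx)).trans (add_zero 0))
    (fun hf x hx => (congrArg Neg.neg (hf x hx)).trans neg_zero)
    (fun {f g} hg x hx =>
      (apply_rightHit f.ofConv g.ofConv x).symm.trans (hg _ (hD.rightHit_mem f.ofConv hx)))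
    (fun {f g} hf x hx =>
      (apply_leftHit g.ofConv f.ofConv x).symm.trans (hf _ (hD.leftHit_mem g.ofConv hx)))

lemma IsSubcoalgebra.mem_annihilator {D : Submodule F A} (hD : IsSubcoalgebra F A D)
    {f : WithConv (A →ₗ[F] F)} : f ∈ hD.annihilator ↔ ∀ x ∈ D, f x = 0 :=
  TwoSidedIdeal.mem_mk' ..

/-- The subspace of a coalgebra on which all elements of an ideal of the convolution algebra
vanish. -/
def coannihilator (I : TwoSidedIdeal (WithConv (A →ₗ[F] F))) : Submodule F A :=
  Submodule.dualCoannihilator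
    ((I.asIdeal.restrictScalars F).map (WithConv.linearEquiv F (A →ₗ[F] F)).toLinearMap)

variable {I : TwoSidedIdeal (WithConv (A →ₗ[F] F))}

lemma mem_coannihilator {x : A} : x ∈ coannihilator I ↔ ∀ f ∈ I, f x = 0 := by
  rw [coannihilator, Submodule.mem_dualCoannihilator]
  exact ⟨fun h f hf => h f.ofConv ⟨f, hf, rfl⟩, fun h φ ⟨f, hf, hfφ⟩ => hfφ ▸ h f hf⟩

lemma le_annihilator_iff {D : Submodule F A} (hD : IsSubcoalgebra F A D) :
    I ≤ hD.annihilator ↔ D ≤ coannihilator I := by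
  simp only [SetLike.le_def, hD.mem_annihilator, mem_coannihilator]
  exact ⟨fun h x hx f hf => h hf x hx, fun h f hf x hx => h hx f hf⟩

lemma coannihilator_annihilator {D : Submodule F A} (hD : IsSubcoalgebra F A D) :
    coannihilator hD.annihilator = D := by
  refine le_antisymm (fun x hx => ?_) ((le_annihilator_iff hD).mp le_rfl)
  by_contra hxD
  obtain ⟨f, hfx, hf⟩ := Submodule.exists_le_ker_of_notMem hxD
  exact hfx (mem_coannihilator.mp hx (toConv f) (hD.mem_annihilator.mpr fun y hy => hf hy))

variable [FiniteDimensional F A]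

lemma mem_of_forall_mem_coannihilator {f : WithConv (A →ₗ[F] F)}
    (hf : ∀ x ∈ coannihilator I, f x = 0) : f ∈ I := by
  let W : Submodule F (Module.Dual F A) :=
    (I.asIdeal.restrictScalars F).map (WithConv.linearEquiv F (A →ₗ[F] F)).toLinearMap
  have hfW : f.ofConv ∈ W.dualCoannihilator.dualAnnihilator :=
    (Submodule.mem_dualAnnihilator f.ofConv).mpr hf
  have : FiniteDimensional F W := FiniteDimensional.finiteDimensional_submodule W
  rw [Subspace.dualCoannihilator_dualAnnihilator_eq] at hfW
  obtain ⟨g, hg, g_eq⟩ := hfW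
  exact ofConv_injective g_eq ▸ hg

lemma isSubcoalgebra_of_forall_hit_mem {C : Submodule F A}
    (h_left : ∀ f : Module.Dual F A, ∀ x ∈ C, leftHit f x ∈ C)
    (h_right : ∀ f : Module.Dual F A, ∀ x ∈ C, rightHit f x ∈ C) :
    IsSubcoalgebra F A C := by
  intro x hx
  obtain ⟨p, hp⟩ := LinearMap.exists_leftInverse_of_injective C.subtype (Submodule.ker_subtype _)
  let q : A →ₗ[F] A := C.subtype ∘ₗ p
  have q_apply {y : A} (hy : y ∈ C) : q y = y :=
    congrArg Subtype.val (LinearMap.congr_fun hp ⟨y, hy⟩)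
  let b := Module.finBasis F A
  have lTensor_q : q.lTensor A (comul x) = comul x := by
    rw [comul_eq_sum_basis_tmul_rightHit b, map_sum]
    simp only [LinearMap.lTensor_tmul, q_apply (h_right _ x hx)]
  have rTensor_q : q.rTensor A (comul x) = comul x := by
    rw [comul_eq_sum_leftHit_tmul_basis b, map_sum]
    simp only [LinearMap.rTensor_tmul, q_apply (h_left _ x hx)]
  refine ⟨TensorProduct.map p p (comul x), ?_⟩
  calc
    TensorProduct.map C.subtype C.subtype (TensorProduct.map p p (comul x)) =
        q.lTensor A (q.rTensor A (comul x)) := by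
      rw [← LinearMap.comp_apply (LinearMap.lTensor A q), LinearMap.lTensor_comp_rTensor,
        TensorProduct.map_comp, LinearMap.comp_apply]
    _ = comul x := by rw [rTensor_q, lTensor_q]

lemma isSubcoalgebra_coannihilator (I : TwoSidedIdeal (WithConv (A →ₗ[F] F))) :
    IsSubcoalgebra F A (coannihilator I) := by
  refine isSubcoalgebra_of_forall_hit_mem (fun f x hx => mem_coannihilator.mpr fun g hg => ?_)
    fun f x hx => mem_coannihilator.mpr fun g hg => ?_
  · exact (apply_leftHit f g.ofConv x).trans
      (mem_coannihilator.mp hx _ (I.mul_mem_right g (toConv f) hg))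
  · exact (apply_rightHit f g.ofConv x).trans
      (mem_coannihilator.mp hx _ (I.mul_mem_left (toConv f) g hg))

lemma isSimpleSubcoalgebra_coannihilator (hI : IsCoatom I) :
    IsSimpleSubcoalgebra F A (coannihilator I) := by
  refine ⟨isSubcoalgebra_coannihilator I, fun h => hI.1 ?_, fun D hDI hD hD₀ => ?_⟩
  · exact eq_top_iff.mpr fun f _ => mem_of_forall_mem_coannihilator fun x hx => by
      rw [h, Submodule.mem_bot] at hx
      rw [hx, map_zero]
  · have h_top : hD.annihilator ≠ ⊤ := fun h => hD₀ <| eq_bot_iff.mpr fun x hx =>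
      (Module.forall_dual_apply_eq_zero_iff F x).mp fun f =>
        hD.mem_annihilator.mp (h ▸ trivial : toConv f ∈ hD.annihilator) x hx
    have h_eq : hD.annihilator = I :=
      (hI.le_iff.mp ((le_annihilator_iff hD).mpr hDI)).resolve_left h_top
    rw [← h_eq, coannihilator_annihilator]

variable (F A) in
theorem sSup_isSimpleSubcoalgebra_eq_top [IsAlgClosed F] [CharZero F] [IsSemisimpleRing A] :
    sSup {C : Submodule F A | IsSimpleSubcoalgebra F A C} = ⊤ := by
  have := isSemisimpleRing_withConv_dual F A
  refine eq_top_iff.mpr fun x _ => ?_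
  by_contra hx
  obtain ⟨f, hfx, hf⟩ := Submodule.exists_le_ker_of_notMem hx
  have mem_coatom (I : TwoSidedIdeal (WithConv (A →ₗ[F] F))) (hI : IsCoatom I) : toConv f ∈ I :=
    mem_of_forall_mem_coannihilator fun y hy =>
      hf (le_sSup (a := coannihilator I) (isSimpleSubcoalgebra_coannihilator hI) hy)
  have f_eq_zero : toConv f = 0 := by
    rw [← TwoSidedIdeal.mem_bot, ← sInf_coatoms_twoSidedIdeal_eq_bot, TwoSidedIdeal.mem_sInf]
    exact mem_coatom
  exact hfx (by rw [toConv_injective (f_eq_zero.trans toConv_zero.symm), LinearMap.zero_apply])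

end SimpleSubcoalgebras

section MackeyMap

variable {F A : Type} [Field F] [Ring A] [HopfAlgebra F A]

lemma IsDoubleCosetReps.iSup_mul_mul_eq_top {L K : Subalgebra F A} {ι : Type}
    {rep : ι → Submodule F A} (hrep : IsDoubleCosetReps F A L K rep)
    (hA : sSup {C : Submodule F A | IsSimpleSubcoalgebra F A C} = ⊤) :
    ⨆ i, L.toSubmodule * rep i * K.toSubmodule = ⊤ := by
  rw [eq_top_iff, ← hA]
  refine sSup_le fun C hC => ?_
  obtain ⟨i, hi⟩ := hrep.2.2 C hC
  exact le_iSup_of_le i hi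

variable (L K : Subalgebra F A) (Λ : A)
variable (M : Type v) [AddCommGroup M] [Module F M] [Module ↥K M]

/-- The canonical bilinear map `(h, m) ↦ h ⊗ m` from `A × M` to the induced module `A ⊗_K M`. -/
def indMk : A →ₗ[F] M →ₗ[F] Ind F A K M :=
  (TensorProduct.mk F A M).compr₂ ((indRel F A K M).mkQ.restrictScalars F)

lemma indMk_mul (h : A) (a : K) (m : M) : indMk K M (h * a) m = indMk K M h (a • m) := by
  have h_rel : h • ((a : A) ⊗ₜ[F] m - (1 : A) ⊗ₜ[F] (a • m)) ∈ indRel F A K M :=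
    (indRel F A K M).smul_mem h (Submodule.subset_span ⟨a, m, rfl⟩)
  rw [smul_sub, TensorProduct.smul_tmul', TensorProduct.smul_tmul', smul_eq_mul, smul_eq_mul,
    mul_one] at h_rel
  exact (Submodule.Quotient.eq _).mpr h_rel

lemma eq_top_of_forall_indMk_mem {N : Submodule F (Ind F A K M)}
    (hN : ∀ h m, indMk K M h m ∈ N) : N = ⊤ := by
  refine eq_top_iff.mpr fun z _ => ?_
  obtain ⟨t, rfl⟩ := Submodule.Quotient.mk_surjective _ z
  induction t with
  | zero => exact zero_mem _
  | add y z hy hz => exact add_mem (hy trivial) (hz trivial)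
  | tmul h m => exact hN h m

/-- The multiplication map `l ⊗ (x ⊗ m) ↦ lx ⊗ m` from `L ⊗ (CK ⊗ M)` to the induced module
`A ⊗_K M`, from which the component at `C` of the Mackey map is obtained. -/
def lcmToInd (C : Submodule F A) : LCM F A L K C M →ₗ[F] Ind F A K M :=
  TensorProduct.lift (indMk K M) ∘ₗ
    LinearMap.rTensor M
      (LinearMap.mul' F A ∘ₗ TensorProduct.map L.val.toLinearMap (CKsub F A K C).subtype) ∘ₗ
    (TensorProduct.assoc F L (CKsub F A K C) M).symm.toLinearMap

lemma lcmToInd_lcmk (C : Submodule F A) (l : L) (x : CKsub F A K C) (m : M) :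
    lcmToInd L K M C (lcmk F A L K C M l (ckmk F A K M C x m)) = indMk K M ((l : A) * x) m :=
  rfl

lemma compRel_le_ker_lcmToInd (C : Submodule F A) :
    compRel F A L K Λ C M ≤ LinearMap.ker (lcmToInd L K M C) := by
  refine Submodule.span_le.mpr ?_
  rintro _ (⟨l, a, haL, -, x, m, hax, rfl⟩ | ⟨l, x, a, m, hxa, rfl⟩)
  · rw [SetLike.mem_coe, LinearMap.mem_ker, map_sub, lcmToInd_lcmk, lcmToInd_lcmk, mul_assoc,
      sub_self]
  · rw [SetLike.mem_coe, LinearMap.mem_ker, map_sub, lcmToInd_lcmk, lcmToInd_lcmk, ← mul_assoc,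
      indMk_mul, sub_self]

/-- The Mackey map `⊕_C L ⊗_{L ∩ ᶜK} ᶜM → A ⊗_K M`, `l ⊗ v ↦ l v`, for a family of subspaces
`C` of `A`. -/
def mackeyMap {ι : Type} [DecidableEq ι] (rep : ι → Submodule F A) :
    (⨁ i : ι, Comp F A L K Λ (rep i) M) →ₗ[F] Ind F A K M :=
  DirectSum.toModule F ι _ fun i =>
    (compRel F A L K Λ (rep i) M).liftQ (lcmToInd L K M (rep i))
      (compRel_le_ker_lcmToInd L K Λ M (rep i))

lemma mackeyMap_of {ι : Type} [DecidableEq ι] (rep : ι → Submodule F A) (i : ι) (l : L)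
    (x : CKsub F A K (rep i)) (m : M) :
    mackeyMap L K Λ M rep (DirectSum.of (fun i => Comp F A L K Λ (rep i) M) i
      (Submodule.Quotient.mk (lcmk F A L K (rep i) M l (ckmk F A K M (rep i) x m)))) =
      indMk K M ((l : A) * x) m :=
  (DirectSum.toModule_lof F i _).trans (lcmToInd_lcmk L K M (rep i) l x m)

lemma mackeyMap_surjective {ι : Type} [DecidableEq ι] {rep : ι → Submodule F A}
    (hrep : ⨆ i, L.toSubmodule * rep i * K.toSubmodule = ⊤) :
    Function.Surjective (mackeyMap L K Λ M rep) := by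
  refine LinearMap.range_eq_top.mp (eq_top_of_forall_indMk_mem K M fun h m => ?_)
  suffices h_le : ⨆ i, L.toSubmodule * rep i * K.toSubmodule ≤
      (LinearMap.range (mackeyMap L K Λ M rep)).comap ((indMk K M).flip m) from
    h_le (hrep ▸ Submodule.mem_top)
  refine iSup_le fun i => ?_
  rw [mul_assoc, Submodule.mul_le]
  intro l hl x hx
  exact ⟨_, mackeyMap_of L K Λ M rep i ⟨l, hl⟩ ⟨x, hx⟩ m⟩

end MackeyMap

theorem statement_1_general (L K : Subalgebra k H) (Λ : H)
    (_hΛ : IsIdempotentIntegral k H K Λ)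
    (M : Type v) [AddCommGroup M] [Module k M] [Module ↥K M] [IsScalarTower k ↥K M]
    (ι : Type) [DecidableEq ι] (rep : ι → Submodule k H)
    (hrep : IsDoubleCosetReps k H L K rep) :
    ∃ π : (⨁ i : ι, Comp k H L K Λ (rep i) M) →ₗ[k] Ind k H K M,
      Function.Surjective π ∧
      ∀ (i : ι) (l : ↥L) (x : ↥(CKsub k H K (rep i))) (m : M),
        π (DirectSum.of (fun i => Comp k H L K Λ (rep i) M) i
            (Submodule.Quotient.mk
              (lcmk k H L K (rep i) M l (ckmk k H K M (rep i) x m)))) =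
          Submodule.Quotient.mk (((l : H) * (x : H)) ⊗ₜ[k] m) := by
  have h_cover := hrep.iSup_mul_mul_eq_top (sSup_isSimpleSubcoalgebra_eq_top k H)
  exact ⟨mackeyMap L K Λ M rep, mackeyMap_surjective L K Λ M h_cover, mackeyMap_of L K Λ M rep⟩

/-- Theorem 4: let `L` and `K` be Hopf subalgebras of the
semisimple Hopf algebra `H`.  For any finite-dimensional left `K`-module `M`
there is a canonical epimorphism of `L`-modules
`π_M : ⊕_{C ∈ L\H/K} L ⊗_{L ∩ ᶜK} ᶜM → M↑_K^H↓_L^H` given on the component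
indexed by `C` by `l ⊗ v ↦ l·v`.  (A `k`-linear map satisfying the displayed
formula on the spanning elements is automatically `L`-equivariant for the
evident `L`-actions.) -/
theorem statement_1 (L K : Subalgebra k H)
    (hL : IsHopfSubalgebra k H L) (hK : IsHopfSubalgebra k H K)
    (Λ : H) (hΛ : IsIdempotentIntegral k H K Λ)
    (M : Type v) [AddCommGroup M] [Module k M] [Module ↥K M]
    [IsScalarTower k ↥K M] [Module.Finite k M]
    (ι : Type) [DecidableEq ι] (rep : ι → Submodule k H)
    (hrep : IsDoubleCosetReps k H L K rep) :
    ∃ π : (⨁ i : ι, Comp k H L K Λ (rep i) M) →ₗ[k] Ind k H K M,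
      Function.Surjective π ∧
      ∀ (i : ι) (l : ↥L) (x : ↥(CKsub k H K (rep i))) (m : M),
        π (DirectSum.of (fun i => Comp k H L K Λ (rep i) M) i
            (Submodule.Quotient.mk
              (lcmk k H L K (rep i) M l (ckmk k H K M (rep i) x m)))) =
          Submodule.Quotient.mk (((l : H) * (x : H)) ⊗ₜ[k] m) := by
  exact statement_1_general k H L K Λ hΛ M ι rep hrep

end Statements

end

end MackeyPaper
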